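/- Let d ≥ 1 be an integer and L > 0. Let θ₁, …, θ_d : ℝ^d → ℂ be continuous, L-periodic in each coordinate, with absolutely summable Fourier coefficients (Σ_{m ∈ ℤ^d} |θ̂_p(m)| < ∞ for each p), and let C²_{p,q} : ℝ^d → ℂ (1 ≤ p,q ≤ d) be continuous and L-periodic in each coordinate. Define B : ℝ^d × ℝ^d → ℂ by B(x,y) = Σ_{p,q=1}^d (θ_p(x) - θ_p(y)) C²_{p,q}(x-y) (θ_q(x) - θ_q(y)). Then for all k, ℓ ∈ ℤ^d, B̂(k+ℓ, -k) = Σ_{p,q=1}^d Σ_{ω ∈ ℤ^d} θ̂_p(ω) θ̂_q(ℓ-ω) [ Ĉ²_{p,q}(k) + Ĉ²_{p,q}(k+ℓ) - Ĉ²_{p,q}(k+ℓ-ω) - Ĉ²_{p,q}(k+ω) ]. -/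

import Mathlib

open MeasureTheory

/-- A function on `ℝ^d` is `L`-periodic in each coordinate. -/
def PeriodicEach (d : ℕ) (L : ℝ) (h : (Fin d → ℝ) → ℂ) : Prop :=
  ∀ (x : Fin d → ℝ) (j : Fin d), h (Function.update x j (x j + L)) = h x

/-- The `m`-th Fourier coefficient of an `L`-periodic function on `ℝ^d`:
`ĥ(m) = L^{-d} ∫_{[0,L)^d} h(x) e^{-2πi m·x/L} dx`. -/
noncomputable def fCoef (d : ℕ) (L : ℝ) (h : (Fin d → ℝ) → ℂ) (m : Fin d → ℤ) : ℂ :=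
  (1 / (L : ℂ) ^ d) *
    ∫ x in Set.univ.pi fun _ : Fin d => Set.Ico (0:ℝ) L,
      h x * Complex.exp (-(2 * (Real.pi : ℂ) * Complex.I *
        (∑ j, (m j : ℂ) * (x j : ℂ)) / (L : ℂ)))

/-- The `(m,n)`-th Fourier coefficient of an `L`-periodic function on `ℝ^d × ℝ^d`:
`B̂(m,n) = L^{-2d} ∫∫_{[0,L)^d × [0,L)^d} B(x,y) e^{-2πi (m·x + n·y)/L} dx dy`. -/
noncomputable def fCoef2 (d : ℕ) (L : ℝ) (B : (Fin d → ℝ) → (Fin d → ℝ) → ℂ)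
    (m n : Fin d → ℤ) : ℂ :=
  (1 / (L : ℂ) ^ (2 * d)) *
    ∫ x in Set.univ.pi fun _ : Fin d => Set.Ico (0:ℝ) L,
      ∫ y in Set.univ.pi fun _ : Fin d => Set.Ico (0:ℝ) L,
        B x y * Complex.exp (-(2 * (Real.pi : ℂ) * Complex.I *
          ((∑ j, (m j : ℂ) * (x j : ℂ)) + ∑ j, (n j : ℂ) * (y j : ℂ)) / (L : ℂ)))


noncomputable abbrev muT (d : ℕ) : Measure (UnitAddTorus (Fin d)) :=
  Measure.pi fun _ => (AddCircle.haarAddCircle : Measure UnitAddCircle)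

namespace S7
open UnitAddTorus

variable {d : ℕ}

lemma cint {X : Type*} [TopologicalSpace X] [CompactSpace X] [MeasurableSpace X]
    [OpensMeasurableSpace X] (ν : Measure X) [IsFiniteMeasure ν]
    {f : X → ℂ} (hf : Continuous f) : Integrable f ν :=
  hf.integrable_of_hasCompactSupport (HasCompactSupport.of_compactSpace f)

noncomputable def cf (c : C(UnitAddTorus (Fin d), ℂ)) (m : Fin d → ℤ) : ℂ :=
  ∫ t, mFourier (-m) t * c t ∂(muT d)

lemma cf_eq (c : C(UnitAddTorus (Fin d), ℂ)) (m : Fin d → ℤ) :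
    cf c m = mFourierCoeff c m := rfl

lemma e_sub (m : Fin d → ℤ) (x y : UnitAddTorus (Fin d)) :
    mFourier m (x - y) = mFourier m x * mFourier (-m) y := by
  simp only [mFourier, ContinuousMap.coe_mk, ← Finset.prod_mul_distrib]
  refine Finset.prod_congr rfl fun i _ => ?_
  rw [Pi.sub_apply, sub_eq_add_neg, Pi.neg_apply, fourier_apply, fourier_apply, fourier_apply,
    smul_add, AddCircle.toCircle_add]
  simp

instance : (muT d).IsNegInvariant := by
  have : (AddCircle.haarAddCircle : Measure UnitAddCircle).IsNegInvariant := inferInstance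
  infer_instance

lemma conv1 (c : C(UnitAddTorus (Fin d), ℂ)) (m : Fin d → ℤ) (x : UnitAddTorus (Fin d)) :
    ∫ y, c (x - y) * mFourier m y ∂(muT d) = mFourier m x * cf c m := by
  rw [← integral_sub_left_eq_self _ _ x, cf, ← integral_const_mul]
  refine integral_congr_ae (.of_forall fun y => ?_)
  simp only [sub_sub_cancel, e_sub]
  ring

lemma conv2 (c : C(UnitAddTorus (Fin d), ℂ)) (m : Fin d → ℤ) (y : UnitAddTorus (Fin d)) :
    ∫ x, c (x - y) * mFourier (-m) x ∂(muT d) = mFourier (-m) y * cf c m := by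
  rw [← integral_sub_right_eq_self (fun z => mFourier (-m) z * c z) y |>.trans (by rfl : _ = cf c m),
    ← integral_const_mul]
  refine integral_congr_ae (.of_forall fun x => ?_)
  have h : mFourier m y * mFourier (-m) y = 1 := by
    rw [← mFourier_add]; simp [mFourier_zero]
  simp only [e_sub, neg_neg]
  linear_combination (-(c (x - y) * mFourier (-m) x)) * h

lemma A1 (c G : C(UnitAddTorus (Fin d), ℂ)) (m : Fin d → ℤ) :
    ∫ z, G z.1 * (c (z.1 - z.2) * mFourier m z.2) ∂((muT d).prod (muT d)) =
      (∫ x, G x * mFourier m x ∂(muT d)) * cf c m := by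
  rw [integral_prod _ (cint _ (by fun_prop)), ← integral_mul_const]
  refine integral_congr_ae (.of_forall fun x => ?_)
  simp only [integral_const_mul, conv1, mul_assoc]

lemma A2 (c G : C(UnitAddTorus (Fin d), ℂ)) (m : Fin d → ℤ) :
    ∫ z, G z.2 * (c (z.1 - z.2) * mFourier (-m) z.1) ∂((muT d).prod (muT d)) =
      (∫ x, G x * mFourier (-m) x ∂(muT d)) * cf c m := by
  rw [integral_prod_symm _ (cint _ (by fun_prop)), ← integral_mul_const]
  refine integral_congr_ae (.of_forall fun x => ?_)
  simp only [integral_const_mul, conv2, mul_assoc]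

lemma e_add (m n : Fin d → ℤ) (x : UnitAddTorus (Fin d)) :
    mFourier m x * mFourier n x = mFourier (m + n) x := mFourier_add.symm

lemma core1 (c g : C(UnitAddTorus (Fin d), ℂ)) (k l w : Fin d → ℤ) :
    ∫ z, (mFourier w z.1 - mFourier w z.2) * c (z.1 - z.2) * (g z.1 - g z.2) *
      (mFourier (-(k + l)) z.1 * mFourier k z.2) ∂((muT d).prod (muT d)) =
    cf g (l - w) * (cf c k + cf c (k + l) - cf c (k + l - w) - cf c (k + w)) := by
  have a1 := A1 c (g * mFourier w * mFourier (-(k + l))) k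
  have a2 := A1 c (g * mFourier (-(k + l))) (k + w)
  have a3 := A2 c (g * mFourier k) (k + l - w)
  have a4 := A2 c (g * mFourier w * mFourier k) (k + l)
  have b1 : ∫ x, (g * mFourier w * mFourier (-(k + l))) x * mFourier k x ∂(muT d) = cf g (l - w) := by
    refine integral_congr_ae (.of_forall fun x => ?_)
    simp only [ContinuousMap.mul_apply, mul_assoc, e_add]
    rw [mul_comm]; congr 2; congr 1; abel
  have b2 : ∫ x, (g * mFourier (-(k + l))) x * mFourier (k + w) x ∂(muT d) = cf g (l - w) := by
    refine integral_congr_ae (.of_forall fun x => ?_)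
    simp only [ContinuousMap.mul_apply, mul_assoc, e_add]
    rw [mul_comm]; congr 2; congr 1; abel
  have b3 : ∫ x, (g * mFourier k) x * mFourier (-(k + l - w)) x ∂(muT d) = cf g (l - w) := by
    refine integral_congr_ae (.of_forall fun x => ?_)
    simp only [ContinuousMap.mul_apply, mul_assoc, e_add]
    rw [mul_comm]; congr 2; congr 1; abel
  have b4 : ∫ x, (g * mFourier w * mFourier k) x * mFourier (-(k + l)) x ∂(muT d) = cf g (l - w) := by
    refine integral_congr_ae (.of_forall fun x => ?_)
    simp only [ContinuousMap.mul_apply, mul_assoc, e_add]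
    rw [mul_comm]; congr 2; congr 1; abel
  rw [b1] at a1
  rw [b2] at a2
  rw [b3] at a3
  rw [b4] at a4
  rw [mul_sub, mul_sub, mul_add, ← a1, ← a2, ← a3, ← a4, ← integral_add, ← integral_sub,
    ← integral_sub]
  · refine integral_congr_ae (.of_forall fun z => ?_)
    have h3 : mFourier (-(k + l - w)) z.1 = mFourier w z.1 * mFourier (-(k + l)) z.1 := by
      rw [e_add]; congr 1; congr 1; abel
    simp only [ContinuousMap.mul_apply, h3, ← e_add k w]
    ring
  all_goals exact cint _ (by fun_prop)

lemma core (f c g : C(UnitAddTorus (Fin d), ℂ)) (hf : Summable fun m => ‖cf f m‖)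
    (k l : Fin d → ℤ) :
    ∫ x, ∫ y, (f x - f y) * c (x - y) * (g x - g y) *
      (mFourier (-(k + l)) x * mFourier k y) ∂(muT d) ∂(muT d) =
    ∑' w, cf f w * cf g (l - w) *
      (cf c k + cf c (k + l) - cf c (k + l - w) - cf c (k + w)) := by
  rw [← integral_prod (fun z : UnitAddTorus (Fin d) × UnitAddTorus (Fin d) =>
    (f z.1 - f z.2) * c (z.1 - z.2) * (g z.1 - g z.2) *
      (mFourier (-(k + l)) z.1 * mFourier k z.2)) (cint _ (by fun_prop))]
  have hs : Summable (mFourierCoeff f) := Summable.of_norm hf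
  have hF := hasSum_mFourier_series_apply_of_summable hs
  have en : ∀ (m : Fin d → ℤ) x, ‖mFourier m x‖ ≤ 1 := fun m x =>
    ((mFourier m).norm_coe_le_norm x).trans mFourier_norm.le
  have := hasSum_integral_of_dominated_convergence (μ := (muT d).prod (muT d))
    (F := fun w z => cf f w * ((mFourier w z.1 - mFourier w z.2) * c (z.1 - z.2) *
      (g z.1 - g z.2) * (mFourier (-(k + l)) z.1 * mFourier k z.2)))
    (f := fun z => (f z.1 - f z.2) * c (z.1 - z.2) * (g z.1 - g z.2) *
      (mFourier (-(k + l)) z.1 * mFourier k z.2))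
    (fun w _ => ‖cf f w‖ * ((1 + 1) * ‖c‖ * (‖g‖ + ‖g‖) * (1 * 1)))
    (fun w => (cint _ (by fun_prop)).aestronglyMeasurable)
    (fun w => .of_forall fun z => by
      simp only [norm_mul]
      gcongr
      · exact (norm_sub_le _ _).trans (add_le_add (en _ _) (en _ _))
      · exact c.norm_coe_le_norm _
      · exact (norm_sub_le _ _).trans
          (add_le_add (g.norm_coe_le_norm _) (g.norm_coe_le_norm _))
      · exact en _ _
      · exact en _ _)
    (.of_forall fun z => hf.mul_right _)
    (integrable_const _)
    (.of_forall fun z => by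
      have h := ((hF z.1).sub (hF z.2)).mul_right (c (z.1 - z.2) *
        (g z.1 - g z.2) * (mFourier (-(k + l)) z.1 * mFourier k z.2))
      convert! h using 1
      · funext w
        rw [cf_eq]; simp only [smul_eq_mul]; ring
      · ring)
  rw [← this.tsum_eq]
  refine tsum_congr fun w => ?_
  rw [integral_const_mul, core1, mul_assoc]


noncomputable def toT (d : ℕ) (L : ℝ) (x : Fin d → ℝ) : UnitAddTorus (Fin d) :=
  fun j => ((L⁻¹ * x j : ℝ) : UnitAddCircle)

lemma toT_sub (L : ℝ) (x y : Fin d → ℝ) : toT d L (x - y) = toT d L x - toT d L y := by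
  funext j
  simp [toT, mul_sub]

lemma toT_open {L : ℝ} (hL : 0 < L) : IsOpenQuotientMap (toT d L) := by
  have h1 : IsOpenQuotientMap (fun r : ℝ => ((L⁻¹ * r : ℝ) : UnitAddCircle)) :=
    (QuotientAddGroup.isOpenQuotientMap_mk (G := ℝ)
      (N := AddSubgroup.zmultiples (1 : ℝ))).comp
      (Homeomorph.mulLeft₀ L⁻¹ (inv_ne_zero hL.ne')).isOpenQuotientMap
  exact IsOpenQuotientMap.piMap (fun _ : Fin d => h1)

lemma per {L : ℝ} {h : (Fin d → ℝ) → ℂ} (hp : PeriodicEach d L h) (n : Fin d → ℤ)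
    (x : Fin d → ℝ) : h (x + fun j => n j * L) = h x := by
  let P : AddSubgroup (Fin d → ℝ) :=
    { carrier := {v | ∀ x, h (x + v) = h x}
      zero_mem' := by simp
      add_mem' := by
        intro a b ha hb x
        rw [← add_assoc, hb, ha]
      neg_mem' := by
        intro a ha x
        have := ha (x + -a)
        rw [neg_add_cancel_right] at this
        exact this.symm }
  have hs : ∀ j, Pi.single j L ∈ P := by
    intro j x
    rw [← hp x j]
    congr 1
    funext i
    by_cases hi : i = j
    · subst hi; simp
    · simp [hi]
  have hmem : (∑ j, n j • (Pi.single j L : Fin d → ℝ)) ∈ P :=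
    sum_mem fun j _ => P.zsmul_mem (hs j) _
  have he : (∑ j, n j • (Pi.single j L : Fin d → ℝ)) = fun j => n j * L := by
    funext i
    simp [Finset.sum_apply, Pi.single_apply]
  rw [he] at hmem
  exact hmem x

lemma lift_ex {L : ℝ} (hL : 0 < L) {h : (Fin d → ℝ) → ℂ} (hc : Continuous h)
    (hp : PeriodicEach d L h) : ∃ H : C(UnitAddTorus (Fin d), ℂ), ∀ x, H (toT d L x) = h x := by
  have hq := (toT_open (d := d) hL).isQuotientMap
  let f : C(Fin d → ℝ, UnitAddTorus (Fin d)) := ⟨toT d L, hq.continuous⟩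
  have hf : Topology.IsQuotientMap f := hq
  have hh : Function.FactorsThrough (⟨h, hc⟩ : C(Fin d → ℝ, ℂ)) f := by
    intro a b hab
    have : ∀ j, ∃ n : ℤ, b j = a j + n * L := by
      intro j
      have hj : ((L⁻¹ * a j : ℝ) : UnitAddCircle) = ((L⁻¹ * b j : ℝ) : UnitAddCircle) :=
        congrFun hab j
      obtain ⟨n, hn⟩ := AddSubgroup.mem_zmultiples_iff.1 (QuotientAddGroup.eq.1 hj)
      refine ⟨n, ?_⟩
      simp only [zsmul_eq_mul, mul_one] at hn
      field_simp at hn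
      linarith
    choose n hn using this
    have hb : b = a + fun j => n j * L := funext hn
    change h a = h b
    rw [hb, per hp]
  refine ⟨hf.lift _ hh, fun x => ?_⟩
  exact DFunLike.congr_fun (hf.lift_comp _ hh) x

open scoped Pointwise in
lemma int_bridge {L : ℝ} (hL : 0 < L) (G : UnitAddTorus (Fin d) → ℂ) :
    ∫ x in Set.univ.pi fun _ : Fin d => Set.Ico (0:ℝ) L, G (toT d L x) =
      (L : ℂ) ^ d * ∫ t, G t ∂(muT d) := by
  have h0 : ∫ t, G t ∂(muT d) =
      ∫ x in {x : Fin d → ℝ | ∀ i, x i ∈ Set.Ioc (0:ℝ) (0 + 1)}, G (fun i => x i) :=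
    UnitAddTorus.integral_preimage G (fun _ => 0)
  have hset : {x : Fin d → ℝ | ∀ i, x i ∈ Set.Ioc (0:ℝ) (0 + 1)} =
      L⁻¹ • (Set.univ.pi fun _ : Fin d => Set.Ioc (0:ℝ) L) := by
    ext x
    rw [Set.mem_inv_smul_set_iff₀ hL.ne']
    simp only [Set.mem_setOf_eq, Set.mem_pi, Set.mem_univ, true_imp_iff, Set.mem_Ioc,
      Pi.smul_apply, smul_eq_mul, zero_add]
    refine forall_congr' fun i => and_congr ?_ ?_
    · exact (mul_pos_iff_of_pos_left hL).symm
    · exact (mul_le_iff_le_one_right hL).symm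
  have h1 := Measure.setIntegral_comp_smul (volume : Measure (Fin d → ℝ))
    (fun x : Fin d → ℝ => G (fun i => (x i : UnitAddCircle)))
    (Set.univ.pi fun _ : Fin d => Set.Ioc (0:ℝ) L) (inv_ne_zero hL.ne')
  have hae : (Set.univ.pi fun _ : Fin d => Set.Ico (0:ℝ) L) =ᵐ[volume]
      (Set.univ.pi fun _ : Fin d => Set.Ioc (0:ℝ) L) := by
    rw [volume_pi]
    exact (Measure.univ_pi_Ico_ae_eq_Icc (f := fun _ => (0:ℝ)) (g := fun _ => L)).trans
      (Measure.univ_pi_Ioc_ae_eq_Icc (f := fun _ => (0:ℝ)) (g := fun _ => L)).symm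
  rw [h0, hset, setIntegral_congr_set hae]
  refine Eq.trans (Eq.trans ?_ h1) ?_
  · rfl
  · rw [Module.finrank_fin_fun, abs_of_pos (by positivity), inv_pow, inv_inv,
      Complex.real_smul, Complex.ofReal_pow]

lemma mF {L : ℝ} (m : Fin d → ℤ) (x : Fin d → ℝ) :
    mFourier m (toT d L x) = Complex.exp (2 * (Real.pi : ℂ) * Complex.I *
        (∑ j, (m j : ℂ) * (x j : ℂ)) / (L : ℂ)) := by
  simp only [mFourier, ContinuousMap.coe_mk, toT, fourier_coe_apply, ← Complex.exp_sum]
  congr 1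
  rw [Finset.mul_sum, Finset.sum_div]
  refine Finset.sum_congr rfl fun j _ => ?_
  push_cast
  ring

lemma fCoef_eq {L : ℝ} (hL : 0 < L) {h : (Fin d → ℝ) → ℂ} (H : C(UnitAddTorus (Fin d), ℂ))
    (hH : ∀ x, H (toT d L x) = h x) (m : Fin d → ℤ) : fCoef d L h m = cf H m := by
  have hLc : (L : ℂ) ^ d ≠ 0 := pow_ne_zero _ (by exact_mod_cast hL.ne')
  have := int_bridge hL (fun t => mFourier (-m) t * H t)
  rw [fCoef, cf, eq_comm, ← mul_right_inj' hLc, ← this, ← mul_assoc, mul_one_div_cancel hLc, one_mul]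
  congr 1
  funext x
  rw [hH, mF, mul_comm]
  congr 2
  simp only [Pi.neg_apply, Int.cast_neg, neg_mul, Finset.sum_neg_distrib]
  ring

lemma fCoef2_eq {L : ℝ} (hL : 0 < L) {B : (Fin d → ℝ) → (Fin d → ℝ) → ℂ}
    (K : UnitAddTorus (Fin d) → UnitAddTorus (Fin d) → ℂ)
    (hK : ∀ x y, K (toT d L x) (toT d L y) = B x y) (m n : Fin d → ℤ) :
    fCoef2 d L B m n =
      ∫ x, ∫ y, K x y * (mFourier (-m) x * mFourier (-n) y) ∂(muT d) ∂(muT d) := by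
  have hLc : (L : ℂ) ^ d ≠ 0 := pow_ne_zero _ (by exact_mod_cast hL.ne')
  have h1 := int_bridge hL
    (fun x => ∫ y, K x y * (mFourier (-m) x * mFourier (-n) y) ∂(muT d))
  have h2 : ∀ x, ∫ y in Set.univ.pi fun _ : Fin d => Set.Ico (0:ℝ) L,
        B x y * Complex.exp (-(2 * (Real.pi : ℂ) * Complex.I *
          ((∑ j, (m j : ℂ) * (x j : ℂ)) + ∑ j, (n j : ℂ) * (y j : ℂ)) / (L : ℂ))) =
      (L : ℂ) ^ d * ∫ y, K (toT d L x) y * (mFourier (-m) (toT d L x) * mFourier (-n) y) ∂(muT d) := by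
    intro x
    rw [← int_bridge hL]
    congr 1
    funext y
    rw [hK, mF, mF, ← Complex.exp_add]
    congr 2
    simp only [Pi.neg_apply, Int.cast_neg, neg_mul, Finset.sum_neg_distrib]
    ring
  rw [fCoef2]
  simp only [h2]
  rw [integral_const_mul, h1, ← mul_assoc, ← mul_assoc, two_mul, pow_add]
  field_simp

end S7
/-- Fourier coefficients of the second-order term
`B(x,y) = Σ_{p,q} (θ_p(x) - θ_p(y)) C²_{p,q}(x-y) (θ_q(x) - θ_q(y))`:
for all `k, ℓ ∈ ℤ^d`,
`B̂(k+ℓ,-k) = Σ_{p,q} Σ_ω θ̂_p(ω) θ̂_q(ℓ-ω)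
  [Ĉ²_{p,q}(k) + Ĉ²_{p,q}(k+ℓ) - Ĉ²_{p,q}(k+ℓ-ω) - Ĉ²_{p,q}(k+ω)]`. -/
theorem statement7 (d : ℕ) (hd : 1 ≤ d) (L : ℝ) (hL : 0 < L)
    (θ : Fin d → (Fin d → ℝ) → ℂ)
    (hθc : ∀ p, Continuous (θ p)) (hθp : ∀ p, PeriodicEach d L (θ p))
    (hθsum : ∀ p, Summable fun m : Fin d → ℤ => ‖fCoef d L (θ p) m‖)
    (C2 : Fin d → Fin d → (Fin d → ℝ) → ℂ)
    (hC2c : ∀ p q, Continuous (C2 p q)) (hC2p : ∀ p q, PeriodicEach d L (C2 p q))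
    (B : (Fin d → ℝ) → (Fin d → ℝ) → ℂ)
    (hB : ∀ x y, B x y = ∑ p, ∑ q, (θ p x - θ p y) * C2 p q (x - y) * (θ q x - θ q y))
    (k ℓ : Fin d → ℤ) :
    fCoef2 d L B (k + ℓ) (-k) =
      ∑ p, ∑ q, ∑' ω : Fin d → ℤ,
        fCoef d L (θ p) ω * fCoef d L (θ q) (ℓ - ω) *
          (fCoef d L (C2 p q) k + fCoef d L (C2 p q) (k + ℓ) -
            fCoef d L (C2 p q) (k + ℓ - ω) - fCoef d L (C2 p q) (k + ω)) := by
  choose F hF using fun p => S7.lift_ex hL (hθc p) (hθp p)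
  choose C hC using fun p q => S7.lift_ex hL (hC2c p q) (hC2p p q)
  have e1 : ∀ p m, fCoef d L (θ p) m = S7.cf (F p) m := fun p => S7.fCoef_eq hL _ (hF p)
  have e2 : ∀ p q m, fCoef d L (C2 p q) m = S7.cf (C p q) m :=
    fun p q => S7.fCoef_eq hL _ (hC p q)
  simp only [e1] at hθsum
  simp only [e1, e2]
  rw [S7.fCoef2_eq hL
    (fun x y => ∑ p, ∑ q, (F p x - F p y) * C p q (x - y) * (F q x - F q y))
    (fun x y => by simp only [hB, ← S7.toT_sub, hF, hC])]
  simp only [neg_neg, Finset.sum_mul]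
  have hint : ∀ (p q : Fin d), Continuous
      (fun z : UnitAddTorus (Fin d) × UnitAddTorus (Fin d) =>
        (F p z.1 - F p z.2) * C p q (z.1 - z.2) * (F q z.1 - F q z.2) *
        (UnitAddTorus.mFourier (-(k + ℓ)) z.1 * UnitAddTorus.mFourier k z.2)) := by
    intro p q
    fun_prop
  rw [← integral_prod (fun z : UnitAddTorus (Fin d) × UnitAddTorus (Fin d) =>
      ∑ p, ∑ q, (F p z.1 - F p z.2) * C p q (z.1 - z.2) * (F q z.1 - F q z.2) *
        (UnitAddTorus.mFourier (-(k + ℓ)) z.1 * UnitAddTorus.mFourier k z.2))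
    (S7.cint _ (continuous_finsetSum _ fun p _ => continuous_finsetSum _ fun q _ => hint p q)),
    integral_finsetSum _ (fun p _ => S7.cint _ (continuous_finsetSum _ fun q _ => hint p q))]
  refine Finset.sum_congr rfl fun p _ => ?_
  rw [integral_finsetSum _ (fun q _ => S7.cint _ (hint p q))]
  refine Finset.sum_congr rfl fun q _ => ?_
  rw [integral_prod _ (S7.cint _ (hint p q)), ← S7.core _ _ _ (hθsum p)]
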